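/- Let X be a complete separable metric space, let k, ℓ > 0 be real numbers, δ₀ > 0, and C₁, C₂ ≥ 0. For each δ ∈ (0, δ₀] let μ^δ and μ₂^δ be probability measures on X with finite first moment, and let T^δ : X → X be a measurable map which is an approximate transport from μ^δ to μ₂^δ of degree k, i.e. T^δ_* μ^δ is absolutely continuous with respect to μ₂^δ and |(d(T^δ_* μ^δ)/dμ₂^δ)(x) − 1| ≤ C₂·δ^k for μ₂^δ-almost every x. Suppose moreover that the support of μ₂^δ is nonempty with diameter at most C₁·δ^ℓ. Then there exists a constant C > 0 such that for every δ ∈ (0, δ₀], |W₁(μ^δ, μ₂^δ) − W₁(μ^δ, T^δ_* μ^δ)| ≤ C·δ^{k+ℓ}. -/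

import Mathlib

open MeasureTheory Set

/-- The 1-Wasserstein distance: infimum over couplings of the integral of the distance. -/
noncomputable def W1 {X : Type*} [MeasurableSpace X] [PseudoMetricSpace X]
    (μ ν : Measure X) : ℝ :=
  sInf { c : ℝ | ∃ π : Measure (X × X), IsProbabilityMeasure π ∧
      π.map Prod.fst = μ ∧ π.map Prod.snd = ν ∧ c = ∫ p, dist p.1 p.2 ∂π }

/-- The topological support of a measure: points all of whose neighbourhoods have positive
measure. -/
def msupport {X : Type*} [TopologicalSpace X] [MeasurableSpace X] (μ : Measure X) : Set X :=
  {x | ∀ U ∈ nhds x, 0 < μ U}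

/-!
Two measures `σ + a` and `σ + b` with `a` and `b` of equal mass `m` and concentrated on a set of
diameter `D` are almost at the same distance from any `μ`: in a coupling of `μ` with `σ + a`, split
off the part that is sent to `a` and redistribute it independently over `b`. This raises the cost by
at most `D * m`, and the construction is symmetric in `a` and `b`. If `ν` has density `f` with
respect to `μ₂` and `|f - 1| ≤ ε`, then `σ = min(f, 1) μ₂` is a common part of both measures and
`m = ∫ (f - 1)⁺ dμ₂ ≤ ε`. For `ε = C₂ δ^k` and `D ≤ C₁ δ^ℓ` the error is at most `C₁ C₂ δ^(k + ℓ)`.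
-/

open scoped ENNReal

section Decomposition

variable {α β : Type*} [MeasurableSpace α] [MeasurableSpace β]

lemma map_withDensity_comp {π : Measure α} {f : α → β} {g : β → ℝ≥0∞}
    (hf : Measurable f) (hg : Measurable g) :
    (π.withDensity (g ∘ f)).map f = (π.map f).withDensity g := by
  ext s hs
  rw [Measure.map_apply hf hs, withDensity_apply _ (hf hs), withDensity_apply _ hs,
    setLIntegral_map hs hg hf]
  rfl

lemma exists_add_eq_of_map_eq_add {π : Measure α} {f : α → β} {σ a : Measure β}
    [SigmaFinite σ] [SigmaFinite a] (hf : Measurable f) (h : π.map f = σ + a) :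
    ∃ π₁ π₂ : Measure α, π₁ + π₂ = π ∧ π₁.map f = σ ∧ π₂.map f = a := by
  set s := σ.rnDeriv (σ + a)
  set t := a.rnDeriv (σ + a)
  have hs : Measurable s := Measure.measurable_rnDeriv _ _
  have ht : Measurable t := Measure.measurable_rnDeriv _ _
  have hst : s + t =ᵐ[π.map f] 1 := by
    rw [h]
    exact (Measure.rnDeriv_add' σ a (σ + a)).symm.trans (Measure.rnDeriv_self (σ + a))
  have hst_comp : s ∘ f + t ∘ f =ᵐ[π] 1 := ae_of_ae_map hf.aemeasurable hst
  refine ⟨π.withDensity (s ∘ f), π.withDensity (t ∘ f), ?_, ?_, ?_⟩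
  · rw [← withDensity_add_left (hs.comp hf), withDensity_congr_ae hst_comp, withDensity_one]
  · rw [map_withDensity_comp hf hs, h,
      Measure.withDensity_rnDeriv_eq _ _ (Measure.le_add_right le_rfl).absolutelyContinuous]
  · rw [map_withDensity_comp hf ht, h,
      Measure.withDensity_rnDeriv_eq _ _ (Measure.le_add_left le_rfl).absolutelyContinuous]

lemma withDensity_min_add_withDensity_sub {μ : Measure α} {f g : α → ℝ≥0∞}
    (hf : Measurable f) (hg : Measurable g) :
    μ.withDensity (fun x => min (f x) (g x)) + μ.withDensity (fun x => f x - g x) =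
      μ.withDensity f := by
  rw [← withDensity_add_left (hf.min hg)]
  congr 1 with x
  exact (add_comm _ _).trans tsub_add_min

lemma lintegral_rnDeriv_sub_one_le {ν μ : Measure α} [SigmaFinite ν] [IsProbabilityMeasure μ]
    {ε : ℝ} (hε : ∀ᵐ x ∂μ, |(ν.rnDeriv μ x).toReal - 1| ≤ ε) :
    ∫⁻ x, ν.rnDeriv μ x - 1 ∂μ ≤ ENNReal.ofReal ε :=
  calc ∫⁻ x, ν.rnDeriv μ x - 1 ∂μ ≤ ∫⁻ _, ENNReal.ofReal ε ∂μ := by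
        refine lintegral_mono_ae ?_
        filter_upwards [hε, ν.rnDeriv_lt_top μ] with x hx hfin
        rw [← ENNReal.ofReal_toReal hfin.ne, ← ENNReal.ofReal_one,
          ← ENNReal.ofReal_sub _ zero_le_one]
        exact ENNReal.ofReal_le_ofReal ((le_abs_self _).trans hx)
    _ = ENNReal.ofReal ε := by simp

lemma exists_common_part_of_abs_rnDeriv_sub_one_le {ν μ : Measure α} [SigmaFinite ν]
    [IsProbabilityMeasure μ] {ε : ℝ} (hac : ν ≪ μ)
    (hε : ∀ᵐ x ∂μ, |(ν.rnDeriv μ x).toReal - 1| ≤ ε) :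
    ∃ σ a b : Measure α, σ + a = ν ∧ σ + b = μ ∧ a univ ≤ ENNReal.ofReal ε := by
  have hf : Measurable (ν.rnDeriv μ) := Measure.measurable_rnDeriv ν μ
  refine ⟨μ.withDensity fun x => min (ν.rnDeriv μ x) 1, μ.withDensity fun x => ν.rnDeriv μ x - 1,
    μ.withDensity fun x => 1 - ν.rnDeriv μ x, ?_, ?_, ?_⟩
  · rw [withDensity_min_add_withDensity_sub hf measurable_const,
      Measure.withDensity_rnDeriv_eq ν μ hac]
  · simp_rw [min_comm _ (1 : ℝ≥0∞)]
    rw [withDensity_min_add_withDensity_sub measurable_const hf]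
    exact withDensity_one
  · rw [withDensity_apply _ MeasurableSet.univ, setLIntegral_univ]
    exact lintegral_rnDeriv_sub_one_le hε

end Decomposition

/-- `π` is a coupling (transport plan) of `μ` and `ν`: its marginals are `μ` and `ν`. Total masses
are not normalized, so that couplings can be added. -/
structure IsCoupling {α β : Type*} [MeasurableSpace α] [MeasurableSpace β]
    (π : Measure (α × β)) (μ : Measure α) (ν : Measure β) : Prop where
  map_fst : π.map Prod.fst = μ
  map_snd : π.map Prod.snd = ν

namespace IsCoupling

section Marginals

variable {α β : Type*} [MeasurableSpace α] [MeasurableSpace β] {π π' : Measure (α × β)}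
  {μ μ' : Measure α} {ν ν' : Measure β}

lemma measure_univ (h : IsCoupling π μ ν) : π univ = μ univ := by
  rw [← h.map_fst, Measure.map_apply measurable_fst MeasurableSet.univ, preimage_univ]

lemma isProbabilityMeasure [IsProbabilityMeasure μ] (h : IsCoupling π μ ν) :
    IsProbabilityMeasure π :=
  ⟨h.measure_univ.trans IsProbabilityMeasure.measure_univ⟩

lemma measure_univ_eq (h : IsCoupling π μ ν) : μ univ = ν univ := by
  rw [← h.measure_univ, ← h.map_snd, Measure.map_apply measurable_snd MeasurableSet.univ,
    preimage_univ]

lemma ae_snd {p : β → Prop} (h : IsCoupling π μ ν) (hp : ∀ᵐ y ∂ν, p y) : ∀ᵐ z ∂π, p z.2 :=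
  ae_of_ae_map measurable_snd.aemeasurable (h.map_snd ▸ hp)

lemma add (h : IsCoupling π μ ν) (h' : IsCoupling π' μ' ν') :
    IsCoupling (π + π') (μ + μ') (ν + ν') where
  map_fst := by rw [Measure.map_add _ _ measurable_fst, h.map_fst, h'.map_fst]
  map_snd := by rw [Measure.map_add _ _ measurable_snd, h.map_snd, h'.map_snd]

lemma inv_smul_prod [IsFiniteMeasure μ] [IsFiniteMeasure ν] (h : μ univ = ν univ) :
    IsCoupling ((μ univ)⁻¹ • μ.prod ν) μ ν := by
  rcases eq_or_ne μ 0 with rfl | hμ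
  · obtain rfl : ν = 0 := Measure.measure_univ_eq_zero.1 (by rw [← h]; simp)
    constructor <;> simp
  have hcancel : (μ univ)⁻¹ * μ univ = 1 :=
    ENNReal.inv_mul_cancel (Measure.measure_univ_ne_zero.2 hμ) (measure_ne_top μ univ)
  constructor
  · rw [Measure.map_smul, Measure.map_fst_prod, ← h, smul_smul, hcancel, one_smul]
  · rw [Measure.map_smul, Measure.map_snd_prod, smul_smul, hcancel, one_smul]

lemma exists_add_of_add_right {σ a : Measure β} [SigmaFinite σ] [SigmaFinite a]
    (h : IsCoupling π μ (σ + a)) :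
    ∃ (π₁ π₂ : Measure (α × β)) (μ₁ μ₂ : Measure α), π₁ + π₂ = π ∧ μ₁ + μ₂ = μ ∧
      IsCoupling π₁ μ₁ σ ∧ IsCoupling π₂ μ₂ a := by
  obtain ⟨π₁, π₂, hπ, hσ, ha⟩ := exists_add_eq_of_map_eq_add measurable_snd h.map_snd
  refine ⟨π₁, π₂, π₁.map Prod.fst, π₂.map Prod.fst, hπ, ?_, ⟨rfl, hσ⟩, ⟨rfl, ha⟩⟩
  rw [← Measure.map_add _ _ measurable_fst, hπ, h.map_fst]

end Marginals

section Cost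

variable {X : Type*} [PseudoMetricSpace X] [SecondCountableTopology X] [MeasurableSpace X]
  [OpensMeasurableSpace X] {π : Measure (X × X)} {μ σ a b : Measure X} {S : Set X}

lemma lintegral_edist_prod_le [SFinite b] (h : IsCoupling π μ a)
    (hab : a univ = b univ) (ha : ∀ᵐ x ∂a, x ∈ S) (hb : ∀ᵐ x ∂b, x ∈ S) :
    ∫⁻ p, edist p.1 p.2 ∂(μ.prod b) ≤
      (∫⁻ p, edist p.1 p.2 ∂π + Metric.ediam S * b univ) * b univ := by
  have hcost : Measurable fun x => ∫⁻ z, edist x z ∂b :=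
    measurable_edist.lintegral_prod_right'
  calc ∫⁻ p, edist p.1 p.2 ∂(μ.prod b) = ∫⁻ x, ∫⁻ z, edist x z ∂b ∂μ :=
        lintegral_prod _ measurable_edist.aemeasurable
    _ = ∫⁻ p, ∫⁻ z, edist p.1 z ∂b ∂π := by
        rw [← h.map_fst, lintegral_map hcost measurable_fst]
    _ ≤ ∫⁻ p, (edist p.1 p.2 + Metric.ediam S) * b univ ∂π := by
        refine lintegral_mono_ae ?_
        filter_upwards [h.ae_snd ha] with p hp
        rw [← lintegral_const]
        refine lintegral_mono_ae ?_
        filter_upwards [hb] with z hz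
        exact (edist_triangle _ _ _).trans (by gcongr; exact Metric.edist_le_ediam_of_mem hp hz)
    _ = (∫⁻ p, edist p.1 p.2 ∂π + Metric.ediam S * b univ) * b univ := by
        rw [lintegral_mul_const _ (by fun_prop), lintegral_add_right _ measurable_const,
          lintegral_const, h.measure_univ, h.measure_univ_eq, hab]

lemma lintegral_edist_inv_smul_prod_le [SFinite b] (h : IsCoupling π μ a)
    (hab : a univ = b univ) (ha : ∀ᵐ x ∂a, x ∈ S) (hb : ∀ᵐ x ∂b, x ∈ S) :
    ∫⁻ p, edist p.1 p.2 ∂((μ univ)⁻¹ • μ.prod b) ≤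
      ∫⁻ p, edist p.1 p.2 ∂π + Metric.ediam S * b univ := by
  set c := ∫⁻ p, edist p.1 p.2 ∂π + Metric.ediam S * b univ
  rw [lintegral_smul_measure, smul_eq_mul, h.measure_univ_eq, hab]
  calc (b univ)⁻¹ * ∫⁻ p, edist p.1 p.2 ∂(μ.prod b) ≤ (b univ)⁻¹ * (c * b univ) := by
        gcongr
        exact h.lintegral_edist_prod_le hab ha hb
    _ = (b univ)⁻¹ * b univ * c := by ring
    _ ≤ c := mul_le_of_le_one_left' (ENNReal.inv_mul_le_one _)

lemma exists_lintegral_edist_le_add [SigmaFinite σ] [IsFiniteMeasure a] [IsFiniteMeasure b]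
    (h : IsCoupling π μ (σ + a)) (hab : a univ = b univ) (ha : ∀ᵐ x ∂a, x ∈ S)
    (hb : ∀ᵐ x ∂b, x ∈ S) :
    ∃ π' : Measure (X × X), IsCoupling π' μ (σ + b) ∧
      ∫⁻ p, edist p.1 p.2 ∂π' ≤ ∫⁻ p, edist p.1 p.2 ∂π + Metric.ediam S * b univ := by
  obtain ⟨π₁, π₂, μ₁, μ₂, rfl, rfl, h₁, h₂⟩ := h.exists_add_of_add_right
  have : IsFiniteMeasure μ₂ := ⟨h₂.measure_univ_eq ▸ measure_lt_top a univ⟩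
  refine ⟨π₁ + (μ₂ univ)⁻¹ • μ₂.prod b,
    h₁.add (inv_smul_prod (h₂.measure_univ_eq.trans hab)), ?_⟩
  rw [lintegral_add_measure, lintegral_add_measure, add_assoc]
  gcongr
  exact h₂.lintegral_edist_inv_smul_prod_le hab ha hb

end Cost

end IsCoupling

/-- Finite first moment: the distance to some base point is integrable. For a finite measure the
choice of the base point does not matter. -/
def HasFiniteFirstMoment {X : Type*} [PseudoMetricSpace X] [MeasurableSpace X]
    (μ : Measure X) : Prop :=
  ∃ x₀ : X, Integrable (fun x => dist x₀ x) μ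

section Wasserstein

variable {X : Type*} [PseudoMetricSpace X] [MeasurableSpace X] {μ ν : Measure X}

lemma HasFiniteFirstMoment.of_ae_mem_isBounded [OpensMeasurableSpace X] [IsFiniteMeasure ν]
    [Nonempty X] {S : Set X} (hS : Bornology.IsBounded S) (hν : ∀ᵐ x ∂ν, x ∈ S) :
    HasFiniteFirstMoment ν := by
  obtain ⟨x₀⟩ := ‹Nonempty X›
  obtain ⟨r, hr⟩ := hS.subset_closedBall x₀
  refine ⟨x₀, Integrable.of_bound (by fun_prop) r ?_⟩
  filter_upwards [hν] with x hx
  rw [Real.norm_of_nonneg dist_nonneg, dist_comm]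
  exact hr hx

lemma W1_le_integral_dist [IsProbabilityMeasure μ] {π : Measure (X × X)}
    (h : IsCoupling π μ ν) : W1 μ ν ≤ ∫ p, dist p.1 p.2 ∂π := by
  refine csInf_le ⟨0, ?_⟩ ⟨π, h.isProbabilityMeasure, h.map_fst, h.map_snd, rfl⟩
  rintro _ ⟨_, _, _, _, rfl⟩
  exact integral_nonneg fun _ => dist_nonneg

lemma le_W1 [IsProbabilityMeasure μ] [IsProbabilityMeasure ν] {c : ℝ}
    (h : ∀ π, IsCoupling π μ ν → c ≤ ∫ p, dist p.1 p.2 ∂π) : c ≤ W1 μ ν := by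
  have hprod : IsCoupling ((μ univ)⁻¹ • μ.prod ν) μ ν := .inv_smul_prod (by simp)
  refine le_csInf ⟨_, _, hprod.isProbabilityMeasure, hprod.map_fst, hprod.map_snd, rfl⟩ ?_
  rintro _ ⟨π, _, hfst, hsnd, rfl⟩
  exact h π ⟨hfst, hsnd⟩

variable [SecondCountableTopology X] [OpensMeasurableSpace X]

lemma integral_dist_eq_toReal_lintegral_edist (π : Measure (X × X)) :
    ∫ p, dist p.1 p.2 ∂π = (∫⁻ p, edist p.1 p.2 ∂π).toReal := by
  simp_rw [dist_edist]
  exact integral_toReal (by fun_prop) (.of_forall fun _ => edist_lt_top _ _)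

lemma IsCoupling.integrable_dist [IsFiniteMeasure μ] {π : Measure (X × X)}
    (h : IsCoupling π μ ν) (hμ : HasFiniteFirstMoment μ) (hν : HasFiniteFirstMoment ν) :
    Integrable (fun p => dist p.1 p.2) π := by
  obtain ⟨x, hx⟩ := hμ
  obtain ⟨y, hy⟩ := hν
  have : IsFiniteMeasure π := ⟨h.measure_univ ▸ measure_lt_top μ univ⟩
  rw [← h.map_fst] at hx
  rw [← h.map_snd] at hy
  refine (((hx.comp_measurable measurable_fst).add (integrable_const (dist x y))).add
    (hy.comp_measurable measurable_snd)).mono' (by fun_prop) (.of_forall fun p => ?_)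
  rw [Real.norm_of_nonneg dist_nonneg]
  exact (dist_triangle4 p.1 x y p.2).trans_eq (by rw [dist_comm p.1 x]; rfl)

lemma IsCoupling.lintegral_edist_ne_top [IsFiniteMeasure μ] {π : Measure (X × X)}
    (h : IsCoupling π μ ν) (hμ : HasFiniteFirstMoment μ) (hν : HasFiniteFirstMoment ν) :
    ∫⁻ p, edist p.1 p.2 ∂π ≠ ∞ := by
  simpa only [edist_dist] using (h.integrable_dist hμ hν).lintegral_lt_top.ne

lemma W1_add_le_W1_add_add_diam_mul {σ a b : Measure X} {S : Set X} [IsProbabilityMeasure μ]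
    [IsFiniteMeasure a] [IsFiniteMeasure b] [IsProbabilityMeasure (σ + a)]
    (hμ : HasFiniteFirstMoment μ) (hσa : HasFiniteFirstMoment (σ + a))
    (hS : Bornology.IsBounded S) (hab : a univ = b univ)
    (ha : ∀ᵐ x ∂a, x ∈ S) (hb : ∀ᵐ x ∂b, x ∈ S) :
    W1 μ (σ + b) ≤ W1 μ (σ + a) + Metric.diam S * b.real univ := by
  have : IsFiniteMeasure σ := isFiniteMeasure_of_le (σ + a) (Measure.le_add_right le_rfl)
  rw [← sub_le_iff_le_add]
  refine le_W1 fun π hπ => sub_le_iff_le_add.2 ?_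
  obtain ⟨π', hπ', hle⟩ := hπ.exists_lintegral_edist_le_add hab ha hb
  have hcost : ∫⁻ p, edist p.1 p.2 ∂π ≠ ∞ := hπ.lintegral_edist_ne_top hμ hσa
  have herror : Metric.ediam S * b univ ≠ ∞ :=
    ENNReal.mul_ne_top hS.ediam_ne_top (measure_ne_top b univ)
  calc W1 μ (σ + b) ≤ ∫ p, dist p.1 p.2 ∂π' := W1_le_integral_dist hπ'
    _ = (∫⁻ p, edist p.1 p.2 ∂π').toReal := integral_dist_eq_toReal_lintegral_edist π'
    _ ≤ (∫⁻ p, edist p.1 p.2 ∂π + Metric.ediam S * b univ).toReal :=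
        ENNReal.toReal_mono (ENNReal.add_ne_top.2 ⟨hcost, herror⟩) hle
    _ = ∫ p, dist p.1 p.2 ∂π + Metric.diam S * b.real univ := by
        rw [ENNReal.toReal_add hcost herror, ENNReal.toReal_mul,
          integral_dist_eq_toReal_lintegral_edist]
        rfl

theorem abs_W1_sub_W1_le_diam_mul {μ₂ : Measure X} {S : Set X} {ε : ℝ} [IsProbabilityMeasure μ]
    [IsProbabilityMeasure ν] [IsProbabilityMeasure μ₂] (hμ : HasFiniteFirstMoment μ)
    (hS : Bornology.IsBounded S) (hμ₂ : ∀ᵐ x ∂μ₂, x ∈ S) (hac : ν ≪ μ₂)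
    (hε : ∀ᵐ x ∂μ₂, |(ν.rnDeriv μ₂ x).toReal - 1| ≤ ε) :
    |W1 μ μ₂ - W1 μ ν| ≤ Metric.diam S * ε := by
  have : Nonempty X := ⟨hμ.choose⟩
  have hε₀ : 0 ≤ ε := by
    obtain ⟨x, hx⟩ := hε.exists
    exact (abs_nonneg _).trans hx
  have hν₁ : HasFiniteFirstMoment ν := .of_ae_mem_isBounded hS (hac.ae_le hμ₂)
  have hμ₂₁ : HasFiniteFirstMoment μ₂ := .of_ae_mem_isBounded hS hμ₂
  obtain ⟨σ, a, b, rfl, rfl, hmass⟩ := exists_common_part_of_abs_rnDeriv_sub_one_le hac hε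
  have : IsFiniteMeasure σ := isFiniteMeasure_of_le (σ + a) (Measure.le_add_right le_rfl)
  have : IsFiniteMeasure a := isFiniteMeasure_of_le (σ + a) (Measure.le_add_left le_rfl)
  have : IsFiniteMeasure b := isFiniteMeasure_of_le (σ + b) (Measure.le_add_left le_rfl)
  have hab : a univ = b univ := (ENNReal.add_right_inj (measure_ne_top σ univ)).1 <| by
    rw [← Measure.add_apply, ← Measure.add_apply, measure_univ, measure_univ]
  have ha : ∀ᵐ x ∂a, x ∈ S := (ae_add_measure_iff.1 (hac.ae_le hμ₂)).2
  have hb : ∀ᵐ x ∂b, x ∈ S := (ae_add_measure_iff.1 hμ₂).2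
  have ha_le : Metric.diam S * a.real univ ≤ Metric.diam S * ε :=
    mul_le_mul_of_nonneg_left (ENNReal.toReal_le_of_le_ofReal hε₀ hmass) Metric.diam_nonneg
  have hb_le : Metric.diam S * b.real univ ≤ Metric.diam S * ε := by
    rwa [Measure.real, ← hab]
  have hupper := W1_add_le_W1_add_add_diam_mul hμ hν₁ hS hab ha hb
  have hlower := W1_add_le_W1_add_add_diam_mul hμ hμ₂₁ hS hab.symm hb ha
  exact abs_sub_le_iff.2 ⟨by linarith, by linarith⟩

end Wasserstein

lemma msupport_eq_support {X : Type*} [TopologicalSpace X] [MeasurableSpace X]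
    (μ : Measure X) : msupport μ = μ.support :=
  Set.ext fun x => (Measure.mem_support_iff_forall x).symm

lemma ae_mem_msupport {X : Type*} [TopologicalSpace X] [HereditarilyLindelofSpace X]
    [MeasurableSpace X] (μ : Measure X) : ∀ᵐ x ∂μ, x ∈ msupport μ :=
  msupport_eq_support μ ▸ Measure.support_mem_ae

theorem approximate_transport_w1_general
    {X : Type*} [PseudoMetricSpace X] [TopologicalSpace.SeparableSpace X]
    [MeasurableSpace X] [OpensMeasurableSpace X]
    (k l δ₀ C₁ C₂ : ℝ) (hC₁ : 0 ≤ C₁) (hC₂ : 0 ≤ C₂)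
    (μ μ₂ : ℝ → Measure X) (T : ℝ → X → X)
    (hprob : ∀ δ ∈ Ioc 0 δ₀, IsProbabilityMeasure (μ δ) ∧ IsProbabilityMeasure (μ₂ δ))
    (hmom : ∀ δ ∈ Ioc 0 δ₀, HasFiniteFirstMoment (μ δ))
    (hTmeas : ∀ δ ∈ Ioc 0 δ₀, AEMeasurable (T δ) (μ δ))
    (hac : ∀ δ ∈ Ioc 0 δ₀, (μ δ).map (T δ) ≪ μ₂ δ)
    (hrn : ∀ δ ∈ Ioc 0 δ₀,
      ∀ᵐ x ∂(μ₂ δ), |(((μ δ).map (T δ)).rnDeriv (μ₂ δ) x).toReal - 1| ≤ C₂ * δ ^ k)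
    (hsupp : ∀ δ ∈ Ioc 0 δ₀, Metric.ediam (msupport (μ₂ δ)) ≤ ENNReal.ofReal (C₁ * δ ^ l)) :
    ∃ C > (0 : ℝ), ∀ δ ∈ Ioc 0 δ₀,
      |W1 (μ δ) (μ₂ δ) - W1 (μ δ) ((μ δ).map (T δ))| ≤ C * δ ^ (k + l) := by
  have : SecondCountableTopology X := UniformSpace.secondCountable_of_separable X
  refine ⟨C₁ * C₂ + 1, by positivity, fun δ hδ => ?_⟩
  have hδ_pos : 0 < δ := hδ.1
  obtain ⟨_, _⟩ := hprob δ hδ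
  have := Measure.isProbabilityMeasure_map (hTmeas δ hδ)
  have hbounded : Bornology.IsBounded (msupport (μ₂ δ)) :=
    Metric.isBounded_iff_ediam_ne_top.2 (ne_top_of_le_ne_top ENNReal.ofReal_ne_top (hsupp δ hδ))
  have hdiam : Metric.diam (msupport (μ₂ δ)) ≤ C₁ * δ ^ l :=
    ENNReal.toReal_le_of_le_ofReal (by positivity) (hsupp δ hδ)
  calc |W1 (μ δ) (μ₂ δ) - W1 (μ δ) ((μ δ).map (T δ))|
      ≤ Metric.diam (msupport (μ₂ δ)) * (C₂ * δ ^ k) :=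
        abs_W1_sub_W1_le_diam_mul (hmom δ hδ) hbounded (ae_mem_msupport _) (hac δ hδ) (hrn δ hδ)
    _ ≤ C₁ * δ ^ l * (C₂ * δ ^ k) := by gcongr
    _ = C₁ * C₂ * δ ^ (k + l) := by rw [Real.rpow_add hδ_pos]; ring
    _ ≤ (C₁ * C₂ + 1) * δ ^ (k + l) := by gcongr; exact le_add_of_nonneg_right zero_le_one

/-- If `T^δ` is an approximate transport map from `μ^δ` to `μ₂^δ` of degree `k` and the
support of `μ₂^δ` has diameter `O(δ^ℓ)`, then
`|W₁(μ^δ, μ₂^δ) − W₁(μ^δ, T^δ_* μ^δ)| = O(δ^{k+ℓ})`. -/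
theorem approximate_transport_w1
    {X : Type*} [MetricSpace X] [CompleteSpace X] [TopologicalSpace.SeparableSpace X]
    [MeasurableSpace X] [BorelSpace X]
    (k l δ₀ : ℝ) (hk : 0 < k) (hl : 0 < l) (hδ₀ : 0 < δ₀)
    (C₁ C₂ : ℝ) (hC₁ : 0 ≤ C₁) (hC₂ : 0 ≤ C₂)
    (μ μ₂ : ℝ → Measure X) (T : ℝ → X → X)
    (hprob : ∀ δ ∈ Ioc (0:ℝ) δ₀, IsProbabilityMeasure (μ δ) ∧ IsProbabilityMeasure (μ₂ δ))
    (hmom : ∀ δ ∈ Ioc (0:ℝ) δ₀, (∃ x₀ : X, Integrable (fun x => dist x₀ x) (μ δ)) ∧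
      (∃ x₀ : X, Integrable (fun x => dist x₀ x) (μ₂ δ)))
    (hTmeas : ∀ δ ∈ Ioc (0:ℝ) δ₀, Measurable (T δ))
    (hac : ∀ δ ∈ Ioc (0:ℝ) δ₀, (μ δ).map (T δ) ≪ μ₂ δ)
    (hrn : ∀ δ ∈ Ioc (0:ℝ) δ₀,
      ∀ᵐ x ∂(μ₂ δ), |(((μ δ).map (T δ)).rnDeriv (μ₂ δ) x).toReal - 1| ≤ C₂ * δ ^ k)
    (hsupp : ∀ δ ∈ Ioc (0:ℝ) δ₀, (msupport (μ₂ δ)).Nonempty ∧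
      EMetric.diam (msupport (μ₂ δ)) ≤ ENNReal.ofReal (C₁ * δ ^ l)) :
    ∃ C > (0:ℝ), ∀ δ ∈ Ioc (0:ℝ) δ₀,
      |W1 (μ δ) (μ₂ δ) - W1 (μ δ) ((μ δ).map (T δ))| ≤ C * δ ^ (k + l) := by
  exact approximate_transport_w1_general k l δ₀ C₁ C₂ hC₁ hC₂ μ μ₂ T hprob
    (fun δ hδ => (hmom δ hδ).1) (fun δ hδ => (hTmeas δ hδ).aemeasurable) hac hrn
    (fun δ hδ => (hsupp δ hδ).2)
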